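/- (Exact value of the total-variation term in Fu et al.'s weak-supervision bound.) Let Y = {0,1} and suppose: the two classes are balanced, P(X_0) = P(X_1) = 1/2; the weak labels err at equal rates α on each covered class, P({x : ỹ(x) ≠ y(x)} | S ∩ X_j) = α for j ∈ {0,1} with 0 < α < 1/2; and the weak labels abstain independently of the class, P(T | X_j) = P(T) for j ∈ {0,1} (assume P(S ∩ X_j) > 0 for j ∈ {0,1}). For each weak-label value v ∈ {0, 1, ∅} with P({x : ỹ(x) = v}) > 0 and each j ∈ {0,1}, let π(j|v) = P(X_j | {x : ỹ(x) = v}) be the posterior probability of true label j given weak label v. Then the expectation over x drawn from P of Σ_{j ∈ {0,1}} |1[y(x) = j] − π(j | ỹ(x))| equals P(S)·4α(1−α) + P(T). -/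

import Mathlib

open Finset
open scoped Classical

noncomputable section

variable {X Y : Type*} [Fintype X] [DecidableEq X] [DecidableEq Y]

/-- Probability of a finite set of points under the weight function `μ`. -/
def Pw (μ : X → ℝ) (A : Finset X) : ℝ := ∑ x ∈ A, μ x

/-- Conditional probability `P(A | B) = P(A ∩ B) / P(B)`. -/
def cPw (μ : X → ℝ) (A B : Finset X) : ℝ := Pw μ (A ∩ B) / Pw μ B

/-- `err(f, g | U) = P({x : f x ≠ g x} | U)`. -/
def errP {Z : Type*} (μ : X → ℝ) (f g : X → Z) (U : Finset X) : ℝ :=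
  cPw μ (univ.filter fun x => f x ≠ g x) U

/-- Neighborhood of a set: `N(A) = ⋃_{x ∈ A} N(x)`. -/
def nbhd (N : X → Finset X) (A : Finset X) : Finset X := A.biUnion N

/-- `r(f, x) = P({x' : f x' ≠ f x} | N(x))`. -/
def rob (μ : X → ℝ) (N : X → Finset X) (f : X → Y) (x : X) : ℝ :=
  cPw μ (univ.filter fun x' => f x' ≠ f x) (N x)

/-- `R_η(f) = {x : r(f,x) ≤ η}`, the set of η-robust points of `f`. -/
def Rset (μ : X → ℝ) (N : X → Finset X) (η : ℝ) (f : X → Y) : Finset X :=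
  univ.filter fun x => rob μ N f x ≤ η

/-- Edge weight `w(x, x') = P({x})·P({x'})·1[x ∈ N(x')]`. -/
def wE (μ : X → ℝ) (N : X → Finset X) (x x' : X) : ℝ :=
  μ x * μ x' * (if x ∈ N x' then 1 else 0)

/-- `w(V, U) = Σ_{x ∈ V, x' ∈ U} w(x, x')`. -/
def wS (μ : X → ℝ) (N : X → Finset X) (V U : Finset X) : ℝ :=
  ∑ x ∈ V, ∑ x' ∈ U, wE μ N x x'

/-- `P_{1-η}(U, A)`: the η-robust neighborhood size of `U` in `A`. -/
def robNbhdSize (μ : X → ℝ) (N : X → Finset X) (η : ℝ) (U A : Finset X) : ℝ :=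
  sInf {p : ℝ | ∃ V : Finset X,
    (1 - η) * wS μ N (nbhd N U) U ≤ wS μ N V U ∧ p = cPw μ V A}

/-- `M` satisfies `(c, q, η)`-robust expansion on `(A, B)`. -/
def RobustExpansion (μ : X → ℝ) (N : X → Finset X) (c q η : ℝ)
    (M : Set (Finset X)) (A B : Finset X) : Prop :=
  ∀ U ∈ M, cPw μ U B > q → robNbhdSize μ N η U A > c * cPw μ U B

/-- `M` satisfies `(c, q)`-expansion on `(A, B)` (the `η = 0` case). -/
def Expansion (μ : X → ℝ) (N : X → Finset X) (c q : ℝ)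
    (M : Set (Finset X)) (A B : Finset X) : Prop :=
  ∀ U ∈ M, cPw μ U B > q → cPw μ (nbhd N U) A > c * cPw μ U B

/-- Covered set `S = {x : ỹ x ≠ ∅}`. -/
def Scov (yt : X → Option Y) : Finset X := univ.filter fun x => yt x ≠ none

/-- `S_i = S ∩ X_i`. -/
def SiSet (y : X → Y) (yt : X → Option Y) (i : Y) : Finset X :=
  univ.filter fun x => yt x ≠ none ∧ y x = i

/-- `T_i = T ∩ X_i`. -/
def TiSet (y : X → Y) (yt : X → Option Y) (i : Y) : Finset X :=
  univ.filter fun x => yt x = none ∧ y x = i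

/-- `S_i^good = {x ∈ S_i : ỹ x = y x}`. -/
def SiGood (y : X → Y) (yt : X → Option Y) (i : Y) : Finset X :=
  univ.filter fun x => yt x = some (y x) ∧ y x = i

/-- `S_i^bad = S_i \ S_i^good`. -/
def SiBad (y : X → Y) (yt : X → Option Y) (i : Y) : Finset X :=
  SiSet y yt i \ SiGood y yt i

/-- `α_i = P(S_i^bad | S_i)`. -/
def alphaW (μ : X → ℝ) (y : X → Y) (yt : X → Option Y) (i : Y) : ℝ :=
  cPw μ (SiBad y yt i) (SiSet y yt i)

/-- `M_η(B, F) = {R_η(f) ∩ U(B,f) : f ∈ F}`, the η-robust mistake sets on `B`. -/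
def MFam (μ : X → ℝ) (N : X → Finset X) (η : ℝ) (y : X → Y)
    (B : Finset X) (F : Set (X → Y)) : Set (Finset X) :=
  {A | ∃ f ∈ F, A = Rset μ N η f ∩ (B.filter fun x => f x ≠ y x)}

/-- `M'_η(B, F) = {R_η(f) ∩ (B \ U(B,f)) : f ∈ F}`, the η-robust non-mistake sets on `B`. -/
def MFam' (μ : X → ℝ) (N : X → Finset X) (η : ℝ) (y : X → Y)
    (B : Finset X) (F : Set (X → Y)) : Set (Finset X) :=
  {A | ∃ f ∈ F, A = Rset μ N η f ∩ (B.filter fun x => f x = y x)}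

/-!
For a probability vector `p` and an index `i`, `∑ j, |1[i = j] - p j| = 2 (1 - p i)`. Averaging this
over the event `ỹ = v`, on which `y` has law `p = π(· | v)`, gives twice the Gini impurity
`1 - ∑ j, p j ^ 2`, so the expectation equals `2 ∑ v, P(ỹ = v) (1 - ∑ j, π(j | v) ^ 2)`. Balance and
class-independent abstention split `S` evenly between the classes. Hence a label `v ≠ ∅` has
posterior `1 - α` on `v` and `α` on the other label, of impurity `2 α (1 - α)`, while abstention
leaves the uniform prior, of impurity `1 / 2`.
-/

/-- The posterior `π(j | v) = P(y = j | w = v)` of the label `y` given an observation `w`. When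
`P(w = v) = 0` the division makes `π(j | v) = 0` for all `j`. -/
def posterior {ι κ : Type*} [DecidableEq ι] [DecidableEq κ] (μ : X → ℝ) (y : X → ι) (w : X → κ)
    (v : κ) (j : ι) : ℝ :=
  cPw μ (univ.filter fun x => y x = j) (univ.filter fun x => w x = v)

/-- The Gini impurity `1 - ∑ j, p j ^ 2` of a probability vector `p`, the probability that two
independent draws from `p` differ. It measures how far a posterior is from determining the label. -/
def giniImpurity {ι : Type*} [Fintype ι] (p : ι → ℝ) : ℝ := 1 - ∑ j, p j ^ 2

theorem sum_abs_indicator_sub {ι : Type*} [Fintype ι] [DecidableEq ι] {p : ι → ℝ}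
    (hp : ∀ j, 0 ≤ p j) (hp1 : ∑ j, p j = 1) (i : ι) :
    ∑ j, |(if i = j then (1 : ℝ) else 0) - p j| = 2 * (1 - p i) := by
  have hpi : p i ≤ 1 := hp1 ▸ single_le_sum (fun j _ => hp j) (mem_univ i)
  have hterm (j : ι) :
      |(if i = j then (1 : ℝ) else 0) - p j| = p j + if i = j then 1 - 2 * p i else 0 := by
    split_ifs with hij
    · subst hij
      rw [abs_of_nonneg (sub_nonneg.2 hpi)]
      ring
    · rw [zero_sub, abs_neg, abs_of_nonneg (hp j), add_zero]
  simp only [hterm, sum_add_distrib, hp1, sum_ite_eq, mem_univ, if_true]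
  ring

section Events

variable {Ω : Type*} [DecidableEq Ω] {μ : Ω → ℝ}

theorem cPw_nonneg (hμ : ∀ x, 0 ≤ μ x) (A B : Finset Ω) : 0 ≤ cPw μ A B :=
  div_nonneg (sum_nonneg fun x _ => hμ x) (sum_nonneg fun x _ => hμ x)

theorem Pw_inter_eq_cPw_mul (A : Finset Ω) {B : Finset Ω} (hB : Pw μ B ≠ 0) :
    Pw μ (A ∩ B) = cPw μ A B * Pw μ B :=
  (div_mul_cancel₀ _ hB).symm

theorem cPw_eq_Pw_symm {A B : Finset Ω} (hA : Pw μ A ≠ 0) (hB : Pw μ B ≠ 0)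
    (hAB : cPw μ A B = Pw μ A) : cPw μ B A = Pw μ B := by
  rw [cPw, inter_comm, Pw_inter_eq_cPw_mul A hB, hAB, mul_div_cancel_left₀ _ hA]

variable [Fintype Ω]

theorem cPw_univ_sdiff (A : Finset Ω) {B : Finset Ω} (hB : Pw μ B ≠ 0) :
    cPw μ (univ \ A) B = 1 - cPw μ A B := by
  have hsplit : Pw μ ((univ \ A) ∩ B) + Pw μ (A ∩ B) = Pw μ B := by
    rw [← compl_eq_univ_sdiff, inter_comm Aᶜ, inter_comm A, ← sdiff_eq_inter_compl, add_comm]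
    exact sum_inter_add_sum_sdiff B A μ
  rw [cPw, cPw, eq_sub_iff_add_eq, ← add_div, hsplit, div_self hB]

theorem cPw_univ_sdiff_eq_Pw (hμ1 : ∑ x, μ x = 1) {A B : Finset Ω} (hB : Pw μ B ≠ 0)
    (hAB : cPw μ A B = Pw μ A) : cPw μ (univ \ A) B = Pw μ (univ \ A) := by
  rw [cPw_univ_sdiff A hB, hAB, ← hμ1, sub_eq_iff_eq_add]
  exact (sum_sdiff (subset_univ A)).symm

variable {ι : Type*} [Fintype ι] [DecidableEq ι] (y : Ω → ι)

theorem sum_mul_comp_eq_sum_Pw_inter_mul (B : Finset Ω) (g : ι → ℝ) :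
    ∑ x ∈ B, μ x * g (y x) = ∑ j, Pw μ ((univ.filter fun x => y x = j) ∩ B) * g j := by
  rw [← sum_fiberwise B y]
  refine sum_congr rfl fun j _ => ?_
  rw [Pw, sum_mul, filter_inter, univ_inter]
  refine sum_congr rfl fun x hx => ?_
  rw [(mem_filter.1 hx).2]

theorem Pw_eq_sum_Pw_inter (B : Finset Ω) :
    Pw μ B = ∑ j, Pw μ ((univ.filter fun x => y x = j) ∩ B) := by
  simpa only [Pw, mul_one] using sum_mul_comp_eq_sum_Pw_inter_mul (μ := μ) y B fun _ => 1

theorem sum_cPw_eq_one {B : Finset Ω} (hB : Pw μ B ≠ 0) :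
    ∑ j, cPw μ (univ.filter fun x => y x = j) B = 1 := by
  simp only [cPw]
  rw [← sum_div, ← Pw_eq_sum_Pw_inter, div_self hB]

theorem sum_mul_sum_abs_indicator_sub_cPw (hμ : ∀ x, 0 ≤ μ x) (B : Finset Ω) :
    ∑ x ∈ B, μ x *
        ∑ j, |(if y x = j then (1 : ℝ) else 0) - cPw μ (univ.filter fun x' => y x' = j) B| =
      2 * (Pw μ B * giniImpurity fun j => cPw μ (univ.filter fun x => y x = j) B) := by
  set p : ι → ℝ := fun j => cPw μ (univ.filter fun x => y x = j) B
  by_cases hB : Pw μ B = 0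
  · have hnull : ∀ x ∈ B, μ x = 0 := (sum_eq_zero_iff_of_nonneg fun x _ => hμ x).1 hB
    rw [hB, zero_mul, mul_zero]
    exact sum_eq_zero fun x hx => by rw [hnull x hx, zero_mul]
  have hp1 : ∑ j, p j = 1 := sum_cPw_eq_one y hB
  calc ∑ x ∈ B, μ x * ∑ j, |(if y x = j then (1 : ℝ) else 0) - p j|
      = ∑ x ∈ B, μ x * (2 * (1 - p (y x))) := by
        simp only [sum_abs_indicator_sub (fun _ => cPw_nonneg hμ _ B) hp1, p]
    _ = ∑ j, Pw μ ((univ.filter fun x => y x = j) ∩ B) * (2 * (1 - p j)) :=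
        sum_mul_comp_eq_sum_Pw_inter_mul y B fun j => 2 * (1 - p j)
    _ = ∑ j, 2 * Pw μ B * (p j - p j ^ 2) :=
        sum_congr rfl fun j _ => by rw [Pw_inter_eq_cPw_mul _ hB]; ring
    _ = 2 * (Pw μ B * giniImpurity p) := by
        rw [← mul_sum, sum_sub_distrib, hp1, giniImpurity, mul_assoc]

end Events

section Posterior

variable {ι κ : Type*} [Fintype ι] [DecidableEq ι] [DecidableEq κ] {μ : X → ℝ}

theorem sum_mul_sum_abs_indicator_sub_posterior [Fintype κ] (hμ : ∀ x, 0 ≤ μ x) (y : X → ι)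
    (w : X → κ) :
    ∑ x, μ x * ∑ j, |(if y x = j then (1 : ℝ) else 0) - posterior μ y w (w x) j| =
      2 * ∑ v, Pw μ (univ.filter fun x => w x = v) * giniImpurity (posterior μ y w v) := by
  rw [← sum_fiberwise univ w, mul_sum]
  refine sum_congr rfl fun v _ => Eq.trans ?_ (sum_mul_sum_abs_indicator_sub_cPw y hμ _)
  refine sum_congr rfl fun x hx => ?_
  rw [(mem_filter.1 hx).2]
  rfl

theorem Pw_mul_giniImpurity_posterior_of_indep {y : X → ι} (w : X → κ) (v : κ)
    (hy : ∀ j, Pw μ (univ.filter fun x => y x = j) ≠ 0)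
    (hindep : ∀ j, cPw μ (univ.filter fun x => w x = v) (univ.filter fun x => y x = j) =
      Pw μ (univ.filter fun x => w x = v)) :
    Pw μ (univ.filter fun x => w x = v) * giniImpurity (posterior μ y w v) =
      Pw μ (univ.filter fun x => w x = v) *
        giniImpurity fun j => Pw μ (univ.filter fun x => y x = j) := by
  by_cases hv : Pw μ (univ.filter fun x => w x = v) = 0
  · rw [hv, zero_mul, zero_mul]
  · have hprior : posterior μ y w v = fun j => Pw μ (univ.filter fun x => y x = j) :=
      funext fun j => cPw_eq_Pw_symm hv (hy j) (hindep j)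
    rw [hprior]

end Posterior

theorem univ_sdiff_Scov {ι : Type*} (yt : X → Option ι) :
    univ \ Scov yt = univ.filter fun x => yt x = none := by
  ext x
  simp [Scov]

theorem filter_eq_inter_filter_eq_some (y : X → Y) (yt : X → Option Y) (j : Y) :
    (univ.filter fun x => y x = j) ∩ (univ.filter fun x => yt x = some j) =
      (univ \ univ.filter fun x => yt x ≠ some (y x)) ∩
        (Scov yt ∩ univ.filter fun x => y x = j) := by
  ext x
  simp only [Scov, mem_inter, mem_sdiff, mem_filter, mem_univ, true_and]
  grind

theorem filter_eq_inter_filter_eq_some_of_ne (y : X → Bool) (yt : X → Option Bool) {j v : Bool}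
    (hjv : j ≠ v) :
    (univ.filter fun x => y x = j) ∩ (univ.filter fun x => yt x = some v) =
      (univ.filter fun x => yt x ≠ some (y x)) ∩ (Scov yt ∩ univ.filter fun x => y x = j) := by
  ext x
  simp only [Scov, mem_inter, mem_filter, mem_univ, true_and]
  cases yt x <;> cases y x <;> cases j <;> cases v <;> simp_all

section SymmetricNoise

variable {μ : X → ℝ} {y : X → Bool} {yt : X → Option Bool} {α s : ℝ}

theorem Pw_inter_filter_eq_some {j : Bool}
    (hj : Pw μ (Scov yt ∩ univ.filter fun x => y x = j) ≠ 0)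
    (herr : cPw μ (univ.filter fun x => yt x ≠ some (y x))
      (Scov yt ∩ univ.filter fun x => y x = j) = α) (v : Bool) :
    Pw μ ((univ.filter fun x => y x = j) ∩ (univ.filter fun x => yt x = some v)) =
      (if j = v then 1 - α else α) * Pw μ (Scov yt ∩ univ.filter fun x => y x = j) := by
  split_ifs with hjv
  · rw [← hjv, filter_eq_inter_filter_eq_some, Pw_inter_eq_cPw_mul _ hj, cPw_univ_sdiff _ hj,
      herr]
  · rw [filter_eq_inter_filter_eq_some_of_ne y yt hjv, Pw_inter_eq_cPw_mul _ hj, herr]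

theorem Pw_filter_eq_some (hs : s ≠ 0)
    (hcov : ∀ j, Pw μ (Scov yt ∩ univ.filter fun x => y x = j) = s)
    (herr : ∀ j, cPw μ (univ.filter fun x => yt x ≠ some (y x))
      (Scov yt ∩ univ.filter fun x => y x = j) = α) (v : Bool) :
    Pw μ (univ.filter fun x => yt x = some v) = s := by
  rw [Pw_eq_sum_Pw_inter y, Fintype.sum_bool]
  rw [Pw_inter_filter_eq_some (hcov true ▸ hs) (herr true),
    Pw_inter_filter_eq_some (hcov false ▸ hs) (herr false), hcov, hcov, ← add_mul]
  cases v <;> simp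

theorem posterior_some (hs : s ≠ 0)
    (hcov : ∀ j, Pw μ (Scov yt ∩ univ.filter fun x => y x = j) = s)
    (herr : ∀ j, cPw μ (univ.filter fun x => yt x ≠ some (y x))
      (Scov yt ∩ univ.filter fun x => y x = j) = α) (v j : Bool) :
    posterior μ y yt (some v) j = if j = v then 1 - α else α := by
  rw [posterior, cPw, Pw_inter_filter_eq_some (hcov j ▸ hs) (herr j), hcov,
    Pw_filter_eq_some hs hcov herr, mul_div_cancel_right₀ _ hs]

theorem giniImpurity_posterior_some (hs : s ≠ 0)
    (hcov : ∀ j, Pw μ (Scov yt ∩ univ.filter fun x => y x = j) = s)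
    (herr : ∀ j, cPw μ (univ.filter fun x => yt x ≠ some (y x))
      (Scov yt ∩ univ.filter fun x => y x = j) = α) (v : Bool) :
    giniImpurity (posterior μ y yt (some v)) = 2 * α * (1 - α) := by
  have hsum : ∑ j, posterior μ y yt (some v) j ^ 2 = (1 - α) ^ 2 + α ^ 2 := by
    simp only [posterior_some hs hcov herr, Fintype.sum_bool]
    cases v <;> simp [add_comm]
  rw [giniImpurity, hsum]
  ring

end SymmetricNoise

section Abstention

variable {μ : X → ℝ} {y : X → Bool} {yt : X → Option Bool}

theorem Pw_Scov_inter_eq_half (hμ1 : ∑ x, μ x = 1)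
    (hbal : ∀ j, Pw μ (univ.filter fun x => y x = j) = 1 / 2)
    (habst : ∀ j, cPw μ (univ \ Scov yt) (univ.filter fun x => y x = j) =
      Pw μ (univ \ Scov yt)) (j : Bool) :
    Pw μ (Scov yt ∩ univ.filter fun x => y x = j) = Pw μ (Scov yt) / 2 := by
  have hj : Pw μ (univ.filter fun x => y x = j) ≠ 0 := (hbal j).trans_ne one_half_pos.ne'
  have hS : cPw μ (Scov yt) (univ.filter fun x => y x = j) = Pw μ (Scov yt) := by
    simpa only [Finset.sdiff_sdiff_eq_self (subset_univ _)] using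
      cPw_univ_sdiff_eq_Pw hμ1 hj (habst j)
  rw [Pw_inter_eq_cPw_mul _ hj, hS, hbal, mul_one_div]

theorem Pw_mul_giniImpurity_posterior_none
    (hbal : ∀ j, Pw μ (univ.filter fun x => y x = j) = 1 / 2)
    (habst : ∀ j, cPw μ (univ \ Scov yt) (univ.filter fun x => y x = j) =
      Pw μ (univ \ Scov yt)) :
    Pw μ (univ.filter fun x => yt x = none) * giniImpurity (posterior μ y yt none) =
      Pw μ (univ \ Scov yt) / 2 := by
  have hy (j : Bool) : Pw μ (univ.filter fun x => y x = j) ≠ 0 :=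
    (hbal j).trans_ne one_half_pos.ne'
  have hprior : giniImpurity (fun j : Bool => Pw μ (univ.filter fun x => y x = j)) = 1 / 2 := by
    simp only [giniImpurity, hbal, Fintype.sum_bool]
    norm_num
  rw [univ_sdiff_Scov] at habst ⊢
  rw [Pw_mul_giniImpurity_posterior_of_indep yt none hy habst, hprior, mul_one_div]

end Abstention

theorem fu_total_variation_term_general
    (μ : X → ℝ) (y : X → Bool) (yt : X → Option Bool) (α : ℝ)
    (hμ : ∀ x, 0 ≤ μ x) (hμ1 : ∑ x, μ x = 1)
    (hbal : ∀ j : Bool, Pw μ (univ.filter fun x => y x = j) = 1 / 2)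
    (herr : ∀ j : Bool,
      cPw μ (univ.filter fun x => yt x ≠ some (y x))
        (Scov yt ∩ univ.filter fun x => y x = j) = α)
    (habst : ∀ j : Bool,
      cPw μ (univ \ Scov yt) (univ.filter fun x => y x = j) =
        Pw μ (univ \ Scov yt))
    (hpos : ∀ j : Bool, 0 < Pw μ (Scov yt ∩ univ.filter fun x => y x = j)) :
    (∑ x, μ x * ∑ j : Bool,
        |(if y x = j then (1 : ℝ) else 0) -
          cPw μ (univ.filter fun x' => y x' = j)
            (univ.filter fun x' => yt x' = yt x)|) =
      Pw μ (Scov yt) * (4 * α * (1 - α)) + Pw μ (univ \ Scov yt) := by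
  have hcov := Pw_Scov_inter_eq_half hμ1 hbal habst
  have hs : Pw μ (Scov yt) / 2 ≠ 0 := hcov false ▸ (hpos false).ne'
  calc
    _ = 2 * ∑ v, Pw μ (univ.filter fun x => yt x = v) * giniImpurity (posterior μ y yt v) :=
        sum_mul_sum_abs_indicator_sub_posterior hμ y yt
    _ = 2 * (Pw μ (univ \ Scov yt) / 2 + ∑ _v : Bool, Pw μ (Scov yt) / 2 * (2 * α * (1 - α))) := by
        simp only [Fintype.sum_option, Pw_mul_giniImpurity_posterior_none hbal habst,
          Pw_filter_eq_some hs hcov herr, giniImpurity_posterior_some hs hcov herr]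
    _ = Pw μ (Scov yt) * (4 * α * (1 - α)) + Pw μ (univ \ Scov yt) := by
        rw [Fintype.sum_bool]
        ring

/-- Proposition `prop:existing-bound`: exact value of the
total-variation term in Fu et al.'s weak-supervision bound. Labels are booleans,
with `false` playing the role of `0` and `true` that of `1`; `π(j | v)` is the
posterior `P(X_j | ỹ = v)` of the true label given the weak label. -/
theorem fu_total_variation_term
    (μ : X → ℝ) (y : X → Bool) (yt : X → Option Bool) (α : ℝ)
    (hμ : ∀ x, 0 ≤ μ x) (hμ1 : ∑ x, μ x = 1)
    (hbal : ∀ j : Bool, Pw μ (univ.filter fun x => y x = j) = 1 / 2)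
    (hα0 : 0 < α) (hα : α < 1 / 2)
    (herr : ∀ j : Bool,
      cPw μ (univ.filter fun x => yt x ≠ some (y x))
        (Scov yt ∩ univ.filter fun x => y x = j) = α)
    (habst : ∀ j : Bool,
      cPw μ (univ \ Scov yt) (univ.filter fun x => y x = j) =
        Pw μ (univ \ Scov yt))
    (hpos : ∀ j : Bool, 0 < Pw μ (Scov yt ∩ univ.filter fun x => y x = j)) :
    (∑ x, μ x * ∑ j : Bool,
        |(if y x = j then (1 : ℝ) else 0) -
          cPw μ (univ.filter fun x' => y x' = j)
            (univ.filter fun x' => yt x' = yt x)|) =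
      Pw μ (Scov yt) * (4 * α * (1 - α)) + Pw μ (univ \ Scov yt) :=
  fu_total_variation_term_general μ y yt α hμ hμ1 hbal herr habst hpos
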